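/- Let p be a symmetric real polynomial in two variables that is monotone decreasing on [0,1]², i.e. p(x′,y′) ≤ p(x,y) whenever (x,y), (x′,y′) ∈ [0,1]² with x ≤ x′ and y ≤ y′. Then the graphon W defined by W(x,y) = 1 if p(x,y) ≥ 0 and W(x,y) = 0 otherwise is finitely forcible in 𝒲. -/

import Mathlib

open MeasureTheory
open scoped Classical

noncomputable section

/-- The unit interval `[0,1]` as a subset of `ℝ`. -/
def I01 : Set ℝ := Set.Icc 0 1

/-- The cube `[0,1]^n`. -/
def cube (n : ℕ) : Set (Fin n → ℝ) := Set.univ.pi fun _ => I01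

/-- `W` belongs to `𝒲`: a bounded symmetric measurable function on `[0,1]²`. -/
def memW (W : ℝ → ℝ → ℝ) : Prop :=
  Measurable (Function.uncurry W) ∧
  (∀ x ∈ I01, ∀ y ∈ I01, W x y = W y x) ∧
  ∃ C : ℝ, ∀ x ∈ I01, ∀ y ∈ I01, |W x y| ≤ C

/-- `W` belongs to `𝒲₀`: a graphon, i.e. symmetric measurable with values in `[0,1]`. -/
def memW0 (W : ℝ → ℝ → ℝ) : Prop :=
  Measurable (Function.uncurry W) ∧
  (∀ x ∈ I01, ∀ y ∈ I01, W x y = W y x) ∧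
  ∀ x ∈ I01, ∀ y ∈ I01, W x y ∈ Set.Icc (0 : ℝ) 1

/-- Homomorphism density `t(F,W)` of a finite simple graph `F` in `W`. -/
def homDensity {n : ℕ} (F : SimpleGraph (Fin n)) (W : ℝ → ℝ → ℝ) : ℝ :=
  ∫ x in cube n,
    ∏ p ∈ Finset.univ.filter (fun p : Fin n × Fin n => p.1 < p.2 ∧ F.Adj p.1 p.2),
      W (x p.1) (x p.2)

/-- Two kernels are weakly isomorphic if all their homomorphism densities agree. -/
def WeaklyIsomorphic (U W : ℝ → ℝ → ℝ) : Prop :=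
  ∀ (n : ℕ) (F : SimpleGraph (Fin n)), homDensity F U = homDensity F W

/-- `W` is finitely forcible within the class `A`. -/
def FinitelyForcible (A : (ℝ → ℝ → ℝ) → Prop) (W : ℝ → ℝ → ℝ) : Prop :=
  A W ∧ ∃ (k : ℕ) (n : Fin k → ℕ) (F : ∀ i, SimpleGraph (Fin (n i))),
    ∀ U, A U → (∀ i, homDensity (F i) U = homDensity (F i) W) → WeaklyIsomorphic U W

/-- Density function `t^k(F,W)` of a `k`-labeled graph, as a function of the
labeled variables; the graph has `k` labeled and `m` unlabeled vertices. -/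
def labDensity {k m : ℕ} (F : SimpleGraph (Fin (k + m))) (W : ℝ → ℝ → ℝ)
    (x : Fin k → ℝ) : ℝ :=
  ∫ y in cube m,
    ∏ p ∈ Finset.univ.filter
        (fun p : Fin (k + m) × Fin (k + m) => p.1 < p.2 ∧ F.Adj p.1 p.2),
      W (Fin.append x y p.1) (Fin.append x y p.2)

/-- Lebesgue measure on `[0,1]`. -/
def mu : Measure ℝ := volume.restrict I01

instance mu_prob : IsProbabilityMeasure mu := by
  constructor
  simp [mu, I01]

instance mu_noAtoms : NullSingletonClass mu := by
  unfold mu; infer_instance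

lemma mu_ae_mem : ∀ᵐ x ∂mu, x ∈ I01 :=
  ae_restrict_mem measurableSet_Icc

lemma cube_restrict (n : ℕ) :
    (volume : Measure (Fin n → ℝ)).restrict (cube n) = Measure.pi (fun _ => mu) := by
  unfold cube mu
  rw [volume_pi, Measure.restrict_pi_pi]

/-- Projection to two distinct coordinates is measure preserving. -/
lemma mp_pair {n : ℕ} {i j : Fin n} (hij : i ≠ j) :
    MeasurePreserving (fun z : Fin n → ℝ => (z i, z j)) (Measure.pi (fun _ => mu))
      (mu.prod mu) := by
  cases n with
  | zero => exact i.elim0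
  | succ n =>
    obtain ⟨k, rfl⟩ := Fin.exists_succAbove_eq hij.symm
    have h1 := measurePreserving_piFinSuccAbove (fun _ : Fin (n+1) => mu) i
    have h2 : MeasurePreserving (fun z : Fin n → ℝ => z k) (Measure.pi (fun _ => mu)) mu :=
      measurePreserving_eval (fun _ : Fin n => mu) k
    exact ((MeasurePreserving.id mu).prod h2).comp h1

lemma diag_null : ∀ᵐ z ∂(mu.prod mu), z.1 ≠ z.2 := by
  rw [Measure.ae_prod_iff_ae_ae]
  · refine Filter.Eventually.of_forall fun x => ?_
    have : ∀ᵐ y ∂mu, y ≠ x := by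
      simp [ae_iff]
    filter_upwards [this] with y hy using hy.symm
  · exact (measurableSet_eq_fun measurable_fst measurable_snd).compl

lemma pi_inj (n : ℕ) :
    ∀ᵐ z ∂(Measure.pi (fun _ : Fin n => mu)), Function.Injective z := by
  have : ∀ᵐ z ∂(Measure.pi (fun _ : Fin n => mu)), ∀ i j : Fin n, i ≠ j → z i ≠ z j := by
    rw [ae_all_iff]; intro i
    rw [ae_all_iff]; intro j
    by_cases hij : i = j
    · simp [hij]
    · have := (mp_pair hij).quasiMeasurePreserving.ae diag_null
      filter_upwards [this] with z hz _ using hz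
  filter_upwards [this] with z hz i j h
  by_contra hne
  exact hz i j hne h

/-- The tie-broken strict order with key `κ`. -/
def prec (κ : ℝ → ℝ) (x y : ℝ) : Prop := toLex (κ x, x) < toLex (κ y, y)

lemma prec_iff (κ : ℝ → ℝ) (x y : ℝ) : prec κ x y ↔ κ x < κ y ∨ (κ x = κ y ∧ x < y) := by
  unfold prec; rw [Prod.Lex.toLex_lt_toLex]

lemma prec_meas {κ : ℝ → ℝ} (hκ : Measurable κ) :
    MeasurableSet {z : ℝ × ℝ | prec κ z.1 z.2} := by
  simp only [prec_iff]
  have h1 : Measurable fun z : ℝ × ℝ => κ z.1 := hκ.comp measurable_fst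
  have h2 : Measurable fun z : ℝ × ℝ => κ z.2 := hκ.comp measurable_snd
  exact (measurableSet_lt h1 h2).union
    ((measurableSet_eq_fun h1 h2).inter (measurableSet_lt measurable_fst measurable_snd))

lemma prec_meas_comp {κ : ℝ → ℝ} (hκ : Measurable κ) {α : Type*} [MeasurableSpace α]
    {f g : α → ℝ} (hf : Measurable f) (hg : Measurable g) :
    MeasurableSet {a | prec κ (f a) (g a)} :=
  (hf.prodMk hg) (prec_meas hκ)

lemma exists_max (κ : ℝ → ℝ) {n : ℕ} (z : Fin (n+1) → ℝ) (hz : Function.Injective z) :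
    ∃! i : Fin (n+1), ∀ j : Fin n, prec κ (z (i.succAbove j)) (z i) := by
  obtain ⟨i, -, hi⟩ := Finset.exists_max_image (Finset.univ : Finset (Fin (n+1)))
    (fun i => toLex (κ (z i), z i)) ⟨0, Finset.mem_univ _⟩
  have key : ∀ a b : Fin (n+1), a ≠ b → toLex (κ (z a), z a) ≠ toLex (κ (z b), z b) := by
    intro a b hab h
    have := congrArg (fun q => (ofLex q).2) h
    exact hab (hz this)
  refine ⟨i, fun j => lt_of_le_of_ne (hi _ (Finset.mem_univ _)) (key _ _ (Fin.succAbove_ne i j)), ?_⟩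
  intro i' hi'
  by_contra hne
  obtain ⟨k, hk⟩ := Fin.exists_succAbove_eq (Ne.symm hne)
  have := hi' k
  rw [hk] at this
  exact absurd (hi i' (Finset.mem_univ _)) (not_le.mpr this)

lemma integrable_of_bdd {α : Type*} [MeasurableSpace α] {ν : Measure α} [IsFiniteMeasure ν]
    {f : α → ℝ} (hf : Measurable f) (C : ℝ) (hC : ∀ x, |f x| ≤ C) : Integrable f ν :=
  Integrable.of_bound hf.aestronglyMeasurable C (Filter.Eventually.of_forall hC)

lemma abs_prod_le {ι : Type*} (s : Finset ι) (f : ι → ℝ) (C : ℝ) (h : ∀ i ∈ s, |f i| ≤ C) :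
    |∏ i ∈ s, f i| ≤ C ^ s.card := by
  rw [Finset.abs_prod]
  refine (Finset.prod_le_prod (fun i _ => abs_nonneg _) h).trans (by simp)

/-- Symmetrisation identity. -/
lemma pow_integral_eq {κ : ℝ → ℝ} (hκ : Measurable κ) {g : ℝ → ℝ} (hg : Measurable g)
    (C : ℝ) (hC : ∀ x, |g x| ≤ C) (b : ℕ) :
    (∫ y, g y ∂mu) ^ (b+1) =
      (b+1) * ∫ y, g y * (∫ x, (if prec κ x y then g x else 0) ∂mu) ^ b ∂mu := by
  have hterm : ∀ i : Fin (b+1),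
      ∫ z, (if ∀ j : Fin b, prec κ (z (i.succAbove j)) (z i) then ∏ k, g (z k) else 0)
        ∂(Measure.pi (fun _ : Fin (b+1) => mu)) =
      ∫ y, g y * (∫ x, (if prec κ x y then g x else 0) ∂mu) ^ b ∂mu := by
    intro i
    have h1 := measurePreserving_piFinSuccAbove (fun _ : Fin (b+1) => mu) i
    have hF : Measurable fun w : ℝ × (Fin b → ℝ) =>
        g w.1 * ∏ j, (if prec κ (w.2 j) w.1 then g (w.2 j) else 0) := by
      refine (hg.comp measurable_fst).mul (Finset.measurable_prod _ fun j _ => ?_)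
      refine Measurable.ite ?_ (hg.comp ((measurable_pi_apply j).comp measurable_snd))
        measurable_const
      exact prec_meas_comp hκ ((measurable_pi_apply j).comp measurable_snd) measurable_fst
    have h2 : ∫ z, (if ∀ j : Fin b, prec κ (z (i.succAbove j)) (z i) then ∏ k, g (z k) else 0)
        ∂(Measure.pi (fun _ : Fin (b+1) => mu)) =
        ∫ w, g w.1 * ∏ j, (if prec κ (w.2 j) w.1 then g (w.2 j) else 0)
          ∂(mu.prod (Measure.pi (fun _ : Fin b => mu))) := by
      rw [← h1.integral_comp' ]
      refine integral_congr_ae (Filter.Eventually.of_forall fun z => ?_)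
      change _ = g (z i) * ∏ j : Fin b, (if prec κ (z (i.succAbove j)) (z i) then
        g (z (i.succAbove j)) else 0)
      dsimp only
      rw [Fin.prod_univ_succAbove _ i]
      split_ifs with h
      · congr 1
        exact Finset.prod_congr rfl fun j _ => by rw [if_pos (h j)]
      · push Not at h
        obtain ⟨j, hj⟩ := h
        rw [Finset.prod_eq_zero (Finset.mem_univ j) (if_neg hj), mul_zero]
    rw [h2, integral_prod]
    · refine integral_congr_ae (Filter.Eventually.of_forall fun y => ?_)
      dsimp only
      rw [integral_const_mul,
        integral_fintype_prod_eq_pow (fun x => if prec κ x y then g x else 0)]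
      simp
    · refine integrable_of_bdd hF (C * C ^ b) fun w => ?_
      have hC0 : 0 ≤ C := (abs_nonneg _).trans (hC 0)
      rw [abs_mul]
      refine mul_le_mul (hC _) ?_ (abs_nonneg _) hC0
      refine (abs_prod_le _ _ C fun j _ => ?_).trans (by simp)
      split_ifs
      · exact hC _
      · simpa using hC0
  have hsum : (∫ y, g y ∂mu) ^ (b+1) = ∑ i : Fin (b+1),
      ∫ z, (if ∀ j : Fin b, prec κ (z (i.succAbove j)) (z i) then ∏ k, g (z k) else 0)
        ∂(Measure.pi (fun _ : Fin (b+1) => mu)) := by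
    have hC0 : 0 ≤ C := (abs_nonneg _).trans (hC 0)
    rw [← integral_finsetSum]
    · have := (integral_fintype_prod_eq_pow (ι := Fin (b+1)) (μ := mu) g)
      rw [Fintype.card_fin] at this
      rw [← this]
      refine integral_congr_ae ?_
      filter_upwards [pi_inj (b+1)] with z hz
      obtain ⟨i, hi, hu⟩ := exists_max κ z hz
      rw [Finset.sum_eq_single i]
      · rw [if_pos hi]
      · intro i' _ hne
        rw [if_neg]
        intro h
        exact hne (hu i' h)
      · simp
    · intro i _
      refine integrable_of_bdd ?_ (C ^ (b+1)) fun z => ?_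
      · refine Measurable.ite ?_ (Finset.measurable_prod _ fun k _ =>
          hg.comp (measurable_pi_apply k)) measurable_const
        rw [Set.ofPred_forall]
        refine MeasurableSet.iInter fun j => ?_
        exact prec_meas_comp hκ (measurable_pi_apply (i.succAbove j)) (measurable_pi_apply i)
      · split_ifs
        · exact (abs_prod_le _ _ C fun j _ => hC _).trans (by simp)
        · simpa using pow_nonneg hC0 _
  rw [hsum]
  simp only [hterm]
  simp

/-- The rank function. -/
def rk (κ : ℝ → ℝ) (y : ℝ) : ℝ := ∫ x, (if prec κ x y then (1:ℝ) else 0) ∂mu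

lemma rk_meas {κ : ℝ → ℝ} (hκ : Measurable κ) : Measurable (rk κ) := by
  have : Measurable fun w : ℝ × ℝ => if prec κ w.2 w.1 then (1:ℝ) else 0 :=
    Measurable.ite ((prec_meas hκ).preimage measurable_swap) measurable_const measurable_const
  exact (this.stronglyMeasurable.integral_prod_right' (ν := mu)).measurable

lemma prec_meas_left {κ : ℝ → ℝ} (hκ : Measurable κ) (y : ℝ) :
    MeasurableSet {x | prec κ x y} :=
  prec_meas_comp hκ measurable_id measurable_const

lemma rk_mem {κ : ℝ → ℝ} (_ : Measurable κ) (y : ℝ) : rk κ y ∈ I01 := by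
  constructor
  · exact integral_nonneg fun x => by dsimp only; split_ifs <;> simp
  · have : rk κ y ≤ ∫ x, (1:ℝ) ∂mu := by
      refine integral_mono_of_nonneg (Filter.Eventually.of_forall fun x => ?_) (integrable_const _)
        (Filter.Eventually.of_forall fun x => ?_)
      · dsimp only; split_ifs <;> simp
      · dsimp only; split_ifs <;> simp
    simpa using this

lemma pow_integral_mono {κ : ℝ → ℝ} (hκ : Measurable κ) {g : ℝ → ℝ} (hg : Measurable g)
    (C : ℝ) (hC : ∀ x, |g x| ≤ C)
    (hm : ∀ᵐ y ∂mu, ∀ᵐ x ∂mu, prec κ x y → g y = 0 ∨ g x = 1) (b : ℕ) :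
    (∫ y, g y ∂mu) ^ (b+1) = (b+1) * ∫ y, g y * rk κ y ^ b ∂mu := by
  rw [pow_integral_eq hκ hg C hC b]
  congr 1
  refine integral_congr_ae ?_
  filter_upwards [hm] with y hy
  by_cases h0 : g y = 0
  · simp [h0]
  congr 2
  unfold rk
  refine integral_congr_ae ?_
  filter_upwards [hy] with x hx
  split_ifs with h
  · exact (hx h).resolve_left h0
  · rfl

lemma rk_moment {κ : ℝ → ℝ} (hκ : Measurable κ) (b : ℕ) :
    ∫ y, rk κ y ^ b ∂mu = 1 / (b+1) := by
  have := pow_integral_mono hκ (g := fun _ => 1) measurable_const 1 (by simp) (by simp) b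
  simp only [integral_const, one_mul] at this
  simp at this
  field_simp
  linarith

lemma rk_zero {y : ℝ} (hy : y ∈ I01) : rk (fun _ => 0) y = y := by
  unfold rk
  simp only [prec_iff, lt_irrefl, true_and, false_or]
  have : (fun x : ℝ => if x < y then (1:ℝ) else 0) = (Set.Iio y).indicator 1 := by
    ext x; simp [Set.indicator]
  rw [this, integral_indicator_one measurableSet_Iio]
  unfold mu I01
  obtain ⟨h0, h1⟩ := hy
  rw [measureReal_def, Measure.restrict_apply measurableSet_Iio]
  have : Set.Iio y ∩ Set.Icc 0 1 = Set.Ico 0 y := by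
    ext x; simp; constructor
    · rintro ⟨a, b, c⟩; exact ⟨b, a⟩
    · rintro ⟨a, b⟩; exact ⟨b, a, by linarith⟩
  rw [this]; simp [h0]

lemma rk_mp {κ : ℝ → ℝ} (hκ : Measurable κ) : MeasurePreserving (rk κ) mu mu := by
  refine ⟨rk_meas hκ, ?_⟩
  have : IsProbabilityMeasure (mu.map (rk κ)) :=
    Measure.isProbabilityMeasure_map (rk_meas hκ).aemeasurable
  apply ext_of_forall_integral_eq_of_IsFiniteMeasure
  intro f
  rw [integral_map (rk_meas hκ).aemeasurable f.continuous.aestronglyMeasurable]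
  have hpoly : ∀ q : Polynomial ℝ, ∫ x, q.eval (rk κ x) ∂mu = ∫ x, q.eval x ∂mu := by
    intro q
    have hid : ∀ n : ℕ, ∫ x, x ^ n ∂mu = 1 / (n+1) := by
      intro n
      rw [← rk_moment (κ := fun _ => 0) measurable_const n]
      refine integral_congr_ae ?_
      filter_upwards [mu_ae_mem] with x hx
      rw [rk_zero hx]
    simp only [Polynomial.eval_eq_sum_range]
    rw [integral_finsetSum, integral_finsetSum]
    · refine Finset.sum_congr rfl fun n _ => ?_
      rw [integral_const_mul, integral_const_mul, rk_moment hκ, hid]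
    · intro n _
      refine Integrable.const_mul ?_ _
      refine Integrable.of_bound (Measurable.pow_const measurable_id' n).aestronglyMeasurable 1 ?_
      filter_upwards [mu_ae_mem] with x hx
      rw [Real.norm_eq_abs, abs_pow, abs_of_nonneg hx.1]
      exact pow_le_one₀ hx.1 hx.2
    · intro n _
      refine Integrable.const_mul ?_ _
      refine integrable_of_bdd ((rk_meas hκ).pow_const n) 1 fun x => ?_
      have hx := rk_mem hκ x
      rw [abs_pow, abs_of_nonneg hx.1]
      exact pow_le_one₀ hx.1 hx.2
  have hf1 : Integrable (fun x => f (rk κ x)) mu :=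
    integrable_of_bdd (f.continuous.measurable.comp (rk_meas hκ)) ‖f‖ fun x => f.norm_coe_le_norm _
  have hf2 : Integrable (fun x => f x) mu :=
    integrable_of_bdd f.continuous.measurable ‖f‖ fun x => f.norm_coe_le_norm _
  refine eq_of_forall_dist_le fun ε hε => ?_
  rw [Real.dist_eq]
  obtain ⟨q, hq⟩ := exists_polynomial_near_of_continuousOn 0 1 f f.continuous.continuousOn (ε/2)
    (by linarith)
  have e1 : |∫ x, f (rk κ x) ∂mu - ∫ x, q.eval (rk κ x) ∂mu| ≤ ε/2 := by
    rw [← integral_sub hf1]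
    · have := norm_integral_le_of_norm_le_const (μ := mu) (C := ε/2)
        (f := fun x => f (rk κ x) - q.eval (rk κ x)) (Filter.Eventually.of_forall fun x => by
          rw [Real.norm_eq_abs, abs_sub_comm]
          exact (hq _ (rk_mem hκ x)).le)
      simpa using this
    · have hm : Measurable fun x => q.eval (rk κ x) := q.continuous.measurable.comp (rk_meas hκ)
      refine integrable_of_bdd hm (‖f‖ + ε/2) fun x => ?_
      have h1 := hq _ (rk_mem hκ x)
      have h2 := f.norm_coe_le_norm (rk κ x)
      rw [Real.norm_eq_abs] at h2
      have := abs_sub_abs_le_abs_sub (q.eval (rk κ x)) (f (rk κ x))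
      linarith
  have e2 : |∫ x, f x ∂mu - ∫ x, q.eval x ∂mu| ≤ ε/2 := by
    rw [← integral_sub hf2]
    · have := norm_integral_le_of_norm_le_const (μ := mu) (C := ε/2)
        (f := fun x => f x - q.eval x) (by
          filter_upwards [mu_ae_mem] with x hx
          rw [Real.norm_eq_abs, abs_sub_comm]
          exact (hq _ hx).le)
      simpa using this
    · have hm : Measurable fun x => q.eval x := q.continuous.measurable
      refine Integrable.of_bound hm.aestronglyMeasurable (‖f‖ + ε/2) ?_
      filter_upwards [mu_ae_mem] with x hx
      have h1 := hq _ hx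
      have h2 := f.norm_coe_le_norm x
      rw [Real.norm_eq_abs] at h2 ⊢
      have := abs_sub_abs_le_abs_sub (q.eval x) (f x)
      linarith
  rw [hpoly] at e1
  rw [abs_le] at *
  constructor <;> linarith [e1.1, e1.2, e2.1, e2.2]

/-- Density of a bipartite edge set. -/
def tB {a b : ℕ} (E : Finset (Fin a × Fin b)) (U : ℝ → ℝ → ℝ) : ℝ :=
  ∫ z, ∏ e ∈ E, U (z.1 e.1) (z.2 e.2)
    ∂((Measure.pi (fun _ : Fin a => mu)).prod (Measure.pi (fun _ : Fin b => mu)))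

/-- The graph of a bipartite edge set. -/
def gB {a b : ℕ} (E : Finset (Fin a × Fin b)) : SimpleGraph (Fin (a + b)) :=
  SimpleGraph.fromRel (fun u v => ∃ e ∈ E, u = Fin.castAdd b e.1 ∧ v = Fin.natAdd a e.2)

lemma gB_filter {a b : ℕ} (E : Finset (Fin a × Fin b)) :
    Finset.univ.filter (fun p : Fin (a+b) × Fin (a+b) => p.1 < p.2 ∧ (gB E).Adj p.1 p.2) =
      E.image (fun e => (Fin.castAdd b e.1, Fin.natAdd a e.2)) := by
  ext ⟨u, v⟩
  simp only [Finset.mem_filter, Finset.mem_univ, true_and, Finset.mem_image, Prod.mk.injEq, gB,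
    SimpleGraph.fromRel_adj]
  constructor
  · rintro ⟨hlt, -, h | h⟩
    · obtain ⟨e, he, rfl, rfl⟩ := h
      exact ⟨e, he, rfl, rfl⟩
    · obtain ⟨e, he, rfl, rfl⟩ := h
      exfalso
      simp only [Fin.lt_def, Fin.val_castAdd, Fin.val_natAdd] at hlt
      omega
  · rintro ⟨e, he, rfl, rfl⟩
    have hlt : Fin.castAdd b e.1 < Fin.natAdd a e.2 := by
      simp only [Fin.lt_def, Fin.val_castAdd, Fin.val_natAdd]
      omega
    exact ⟨hlt, hlt.ne, Or.inl ⟨e, he, rfl, rfl⟩⟩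

lemma homDensity_gB {a b : ℕ} (E : Finset (Fin a × Fin b)) (U : ℝ → ℝ → ℝ) :
    homDensity (gB E) U = tB E U := by
  unfold homDensity tB
  rw [cube_restrict, gB_filter]
  have h1 := measurePreserving_sumPiEquivProdPi_symm (fun _ : Fin a ⊕ Fin b => mu)
  have h2 := measurePreserving_piCongrLeft (fun _ : Fin (a+b) => mu)
    (finSumFinEquiv : Fin a ⊕ Fin b ≃ Fin (a+b))
  have h3 := h1.trans h2
  rw [← h3.integral_comp']
  refine integral_congr_ae (Filter.Eventually.of_forall fun z => ?_)
  dsimp only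
  rw [Finset.prod_image]
  · refine Finset.prod_congr rfl fun e _ => ?_
    congr 1
    · rw [← finSumFinEquiv_apply_left]
      exact Equiv.piCongrLeft_apply_apply (fun _ : Fin (a+b) => ℝ) finSumFinEquiv _ (Sum.inl e.1)
    · rw [← finSumFinEquiv_apply_right]
      exact Equiv.piCongrLeft_apply_apply (fun _ : Fin (a+b) => ℝ) finSumFinEquiv _ (Sum.inr e.2)
  · rintro ⟨e1, e2⟩ _ ⟨f1, f2⟩ _ h
    simp only [Prod.mk.injEq] at h
    rw [Fin.castAdd_inj, Fin.natAdd_inj] at h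
    exact Prod.ext h.1 h.2

section kernel

variable {U : ℝ → ℝ → ℝ} {C : ℝ}

lemma meas_comp (hU : Measurable (Function.uncurry U)) {α : Type*} [MeasurableSpace α]
    {f g : α → ℝ} (hf : Measurable f) (hg : Measurable g) : Measurable fun a => U (f a) (g a) :=
  hU.comp (hf.prodMk hg)

lemma tB_meas (hU : Measurable (Function.uncurry U)) {a b : ℕ} (E : Finset (Fin a × Fin b)) :
    Measurable fun z : (Fin a → ℝ) × (Fin b → ℝ) => ∏ e ∈ E, U (z.1 e.1) (z.2 e.2) :=
  Finset.measurable_prod _ fun e _ => meas_comp hU ((measurable_pi_apply _).comp measurable_fst)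
    ((measurable_pi_apply _).comp measurable_snd)

lemma tB_complete {κ : ℝ → ℝ} (hκ : Measurable κ) (hU : Measurable (Function.uncurry U))
    (hC : ∀ x y, |U x y| ≤ C) (hs : ∀ x y, U x y = U y x)
    (hm : ∀ᵐ y ∂mu, ∀ᵐ x ∂mu, ∀ᵐ x' ∂mu, prec κ x' x → U x y = 0 ∨ U x' y = 1) (a b : ℕ) :
    tB (Finset.univ : Finset (Fin (a+1) × Fin (b+1))) U =
      (a+1) * ((b+1) * ∫ x, ∫ y, U x y * rk κ x ^ a * rk κ y ^ b ∂mu ∂mu) := by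
  have hC0 : 0 ≤ C := (abs_nonneg _).trans (hC 0 0)
  have hrk : ∀ (x : ℝ) (n : ℕ), |rk κ x ^ n| ≤ 1 := by
    intro x n
    have hx := rk_mem hκ x
    rw [abs_pow, abs_of_nonneg hx.1]
    exact pow_le_one₀ hx.1 hx.2
  have hgb : ∀ (x : ℝ) (y : Fin (b+1) → ℝ), |∏ j, U x (y j)| ≤ C ^ (b+1) := fun x y =>
    (abs_prod_le _ _ C fun j _ => hC _ _).trans (by simp)
  unfold tB
  -- Step 1
  have s1 : ∫ z, ∏ e : Fin (a+1) × Fin (b+1), U (z.1 e.1) (z.2 e.2)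
      ∂((Measure.pi (fun _ : Fin (a+1) => mu)).prod (Measure.pi (fun _ : Fin (b+1) => mu))) =
      ∫ y : Fin (b+1) → ℝ, (∫ x, ∏ j, U x (y j) ∂mu) ^ (a+1)
        ∂(Measure.pi (fun _ : Fin (b+1) => mu)) := by
    rw [integral_prod_symm]
    · refine integral_congr_ae (Filter.Eventually.of_forall fun y => ?_)
      dsimp only
      have := integral_fintype_prod_eq_pow (ι := Fin (a+1)) (μ := mu) (fun x => ∏ j, U x (y j))
      rw [Fintype.card_fin] at this
      rw [← this]
      simp only [Fintype.prod_prod_type]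
    · exact integrable_of_bdd (tB_meas hU _) (C ^ (Finset.card _)) fun z =>
        abs_prod_le _ _ C fun e _ => hC _ _
  rw [s1]
  -- Step 2
  have s2 : ∀ᵐ y : Fin (b+1) → ℝ ∂(Measure.pi (fun _ : Fin (b+1) => mu)),
      (∫ x, ∏ j, U x (y j) ∂mu) ^ (a+1) =
        (a+1) * ∫ x, (∏ j, U x (y j)) * rk κ x ^ a ∂mu := by
    have : ∀ᵐ y : Fin (b+1) → ℝ ∂(Measure.pi (fun _ : Fin (b+1) => mu)), ∀ j,
        ∀ᵐ x ∂mu, ∀ᵐ x' ∂mu, prec κ x' x → U x (y j) = 0 ∨ U x' (y j) = 1 := by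
      rw [ae_all_iff]
      intro j
      exact (measurePreserving_eval (fun _ : Fin (b+1) => mu) j).quasiMeasurePreserving.ae hm
    filter_upwards [this] with y hy
    refine pow_integral_mono hκ ?_ (C ^ (b+1)) (fun x => hgb x y) ?_ a
    · exact Finset.measurable_prod _ fun j _ => meas_comp hU measurable_id measurable_const
    · rw [← ae_all_iff] at hy
      filter_upwards [hy] with x hx
      rw [← ae_all_iff] at hx
      filter_upwards [hx] with x' hx' hp
      by_cases h0 : ∃ j, U x (y j) = 0
      · obtain ⟨j, hj⟩ := h0
        exact Or.inl (Finset.prod_eq_zero (Finset.mem_univ j) hj)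
      · push Not at h0
        exact Or.inr (Finset.prod_eq_one fun j _ => (hx' j hp).resolve_left (h0 j))
  rw [integral_congr_ae s2, integral_const_mul]
  congr 1
  -- Step 3
  rw [integral_integral_swap, ← integral_const_mul]
  · refine integral_congr_ae ?_
    filter_upwards [hm] with x hx
    rw [integral_mul_const]
    have := integral_fintype_prod_eq_pow (ι := Fin (b+1)) (μ := mu) (fun y => U x y)
    rw [Fintype.card_fin] at this
    rw [this, pow_integral_mono hκ (meas_comp hU measurable_const measurable_id') C (hC x) ?_ b,
      mul_assoc, ← integral_mul_const]
    · congr 1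
      refine integral_congr_ae (Filter.Eventually.of_forall fun y => ?_)
      dsimp only
      ring
    · filter_upwards [hx] with y hy
      filter_upwards [hy] with y' hy'
      rw [hs x y, hs x y']
      exact hy'
  · refine integrable_of_bdd (C := C ^ (b+1)) ?_ fun w => ?_
    · refine Measurable.mul (Finset.measurable_prod _ fun j _ => meas_comp hU measurable_snd
        ((measurable_pi_apply _).comp measurable_fst)) ?_
      exact ((rk_meas hκ).comp measurable_snd).pow_const a
    · rw [Function.uncurry, abs_mul]
      calc _ ≤ C ^ (b+1) * 1 := mul_le_mul (hgb _ _) (hrk _ _) (abs_nonneg _) (by positivity)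
        _ = _ := mul_one _

/-- Signed edge factor. -/
def sg (e : Fin 4 × Fin 4) (u : ℝ) : ℝ := if (e.1 < 2 ↔ e.2 < 2) then u else 1 - u

/-- The signed integral. -/
def JJ (U : ℝ → ℝ → ℝ) : ℝ :=
  ∫ z, ∏ e : Fin 4 × Fin 4, sg e (U (z.1 e.1) (z.2 e.2))
    ∂((Measure.pi (fun _ : Fin 4 => mu)).prod (Measure.pi (fun _ : Fin 4 => mu)))

lemma JJ_expand (hU : Measurable (Function.uncurry U)) (hC : ∀ x y, |U x y| ≤ C) :
    JJ U = ∑ t ∈ (Finset.univ : Finset (Fin 4 × Fin 4)).powerset,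
      (∏ e ∈ t, (if (e.1 < 2 ↔ e.2 < 2) then (0:ℝ) else 1)) *
      (∏ e ∈ Finset.univ \ t, (if (e.1 < 2 ↔ e.2 < 2) then (1:ℝ) else -1)) *
        tB (Finset.univ \ t) U := by
  unfold JJ tB
  simp_rw [← integral_const_mul]
  rw [← integral_finsetSum]
  · refine integral_congr_ae (Filter.Eventually.of_forall fun z => ?_)
    dsimp only
    have : ∀ e : Fin 4 × Fin 4, sg e (U (z.1 e.1) (z.2 e.2)) =
        (if (e.1 < 2 ↔ e.2 < 2) then (0:ℝ) else 1) +
        (if (e.1 < 2 ↔ e.2 < 2) then (1:ℝ) else -1) * U (z.1 e.1) (z.2 e.2) := by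
      intro e
      unfold sg
      split_ifs <;> ring
    rw [Finset.prod_congr rfl fun e _ => this e, Finset.prod_add]
    refine Finset.sum_congr rfl fun t _ => ?_
    rw [Finset.prod_mul_distrib, mul_assoc]
  · intro t _
    refine Integrable.const_mul ?_ _
    exact integrable_of_bdd (tB_meas hU _) (C ^ (Finset.card _)) fun z =>
        abs_prod_le _ _ C fun e _ => hC _ _

/-- One column factor of the signed integral. -/
def GG (U : ℝ → ℝ → ℝ) (x1 x2 x3 x4 : ℝ) : ℝ :=
  ∫ y, U x1 y * U x2 y * (1 - U x3 y) * (1 - U x4 y) ∂mu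

lemma sg_bound {M : ℝ} (e : Fin 4 × Fin 4) (u : ℝ) (h : |u| ≤ M) : |sg e u| ≤ M + 1 := by
  rw [abs_le] at *
  unfold sg
  split_ifs <;> constructor <;> linarith

lemma JJ_eq (hU : Measurable (Function.uncurry U)) (hC : ∀ x y, |U x y| ≤ C) :
    JJ U = ∫ x : Fin 4 → ℝ, (GG U (x 0) (x 1) (x 2) (x 3) * GG U (x 2) (x 3) (x 0) (x 1)) ^ 2
      ∂(Measure.pi (fun _ : Fin 4 => mu)) := by
  unfold JJ
  rw [integral_prod]
  · refine integral_congr_ae (Filter.Eventually.of_forall fun x => ?_)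
    dsimp only
    simp only [Fintype.prod_prod_type_right]
    rw [integral_fintype_prod_eq_prod (fun (j : Fin 4) (y : ℝ) => ∏ i : Fin 4, sg (i, j) (U (x i) y))]
    simp only [Fin.prod_univ_four, sg, GG]
    simp [Fin.lt_def]
    have : ∀ y, (1 - U (x 0) y) * (1 - U (x 1) y) * U (x 2) y * U (x 3) y =
      U (x 2) y * U (x 3) y * (1 - U (x 0) y) * (1 - U (x 1) y) := fun y => by ring
    simp only [this]
    ring
  · refine integrable_of_bdd ?_ ((C+1) ^ (Finset.card _)) fun z =>
        abs_prod_le _ _ (C+1) fun e _ => sg_bound _ _ (hC _ _)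
    refine Finset.measurable_prod _ fun e _ => ?_
    have := meas_comp hU (α := (Fin 4 → ℝ) × (Fin 4 → ℝ))
      ((measurable_pi_apply e.1).comp measurable_fst)
      ((measurable_pi_apply e.2).comp measurable_snd)
    unfold sg
    split_ifs
    · exact this
    · exact measurable_const.sub this

lemma GG_meas (hU : Measurable (Function.uncurry U)) (i j k l : Fin 4) :
    Measurable fun x : Fin 4 → ℝ => GG U (x i) (x j) (x k) (x l) := by
  have h : ∀ i, Measurable fun w : (Fin 4 → ℝ) × ℝ => U (w.1 i) w.2 := fun i =>
    meas_comp hU ((measurable_pi_apply i).comp measurable_fst) measurable_snd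
  have : Measurable fun w : (Fin 4 → ℝ) × ℝ =>
      U (w.1 i) w.2 * U (w.1 j) w.2 * (1 - U (w.1 k) w.2) * (1 - U (w.1 l) w.2) :=
    (((h i).mul (h j)).mul (measurable_const.sub (h k))).mul (measurable_const.sub (h l))
  exact (this.stronglyMeasurable.integral_prod_right' (ν := mu)).measurable

lemma GG_bound (hC : ∀ x y, |U x y| ≤ C) (x1 x2 x3 x4 : ℝ) :
    |GG U x1 x2 x3 x4| ≤ (C+1)^4 := by
  have hC0 : 0 ≤ C := (abs_nonneg _).trans (hC 0 0)
  have := norm_integral_le_of_norm_le_const (μ := mu) (C := (C+1)^4)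
    (f := fun y => U x1 y * U x2 y * (1 - U x3 y) * (1 - U x4 y))
    (Filter.Eventually.of_forall fun y => by
      have h1 : ∀ x, |U x y| ≤ C + 1 := fun x => (hC x y).trans (by linarith)
      have h2 : ∀ x, |1 - U x y| ≤ C + 1 := fun x => by
        have := abs_le.1 (hC x y)
        rw [abs_le]; constructor <;> linarith
      rw [Real.norm_eq_abs, abs_mul, abs_mul, abs_mul]
      calc _ ≤ (C+1) * (C+1) * (C+1) * (C+1) := by
            gcongr
            · exact h1 _
            · exact h1 _
            · exact h2 _
            · exact h2 _
        _ = _ := by ring)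
  simpa [GG] using this

lemma GG_zero (hU : Measurable (Function.uncurry U)) (hC : ∀ x y, |U x y| ≤ C) (hJ : JJ U = 0) :
    ∀ᵐ x : Fin 4 → ℝ ∂(Measure.pi (fun _ : Fin 4 => mu)),
      GG U (x 0) (x 1) (x 2) (x 3) * GG U (x 2) (x 3) (x 0) (x 1) = 0 := by
  rw [JJ_eq hU hC, integral_eq_zero_iff_of_nonneg] at hJ
  · filter_upwards [hJ] with x hx
    simpa using hx
  · intro x
    exact sq_nonneg _
  · refine integrable_of_bdd (C := (((C+1)^4) * ((C+1)^4)) ^ 2)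
      (((GG_meas hU _ _ _ _).mul (GG_meas hU _ _ _ _)).pow_const 2) fun x => ?_
    rw [abs_pow, abs_mul]
    gcongr
    · exact GG_bound hC _ _ _ _
    · exact GG_bound hC _ _ _ _

end kernel

section good

variable {U : ℝ → ℝ → ℝ} {C : ℝ}

/-- `L¹` distance of two rows. -/
def hd (U : ℝ → ℝ → ℝ) (x x' : ℝ) : ℝ := ∫ y, |U x y - U x' y| ∂mu

/-- A point is good if all its neighbourhoods in row distance have positive measure. -/
def Good (U : ℝ → ℝ → ℝ) (x : ℝ) : Prop := ∀ ε > 0, mu {x' | hd U x x' < ε} ≠ 0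

lemma row_meas (hU : Measurable (Function.uncurry U)) (x : ℝ) : Measurable (U x) :=
  meas_comp hU measurable_const measurable_id'

lemma row_int (hU : Measurable (Function.uncurry U)) (hC : ∀ x y, |U x y| ≤ C) (x : ℝ) :
    Integrable (U x) mu := integrable_of_bdd (row_meas hU x) C (hC x)

lemma good_ae (hU : Measurable (Function.uncurry U)) (hC : ∀ x y, |U x y| ≤ C) :
    ∀ᵐ x ∂mu, Good U x := by
  have : Fact ((1 : ENNReal) ≤ 1) := ⟨le_rfl⟩
  have : Fact ((1 : ENNReal) ≠ ⊤) := ⟨ENNReal.one_ne_top⟩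
  have : IsSeparable mu := by unfold mu; infer_instance
  let f : ℕ → Lp ℝ 1 mu := TopologicalSpace.denseSeq (Lp ℝ 1 mu)
  have hfi : ∀ i, Integrable (f i) mu := fun i => L1.integrable_coeFn (f i)
  let E : ℕ → ℕ → Set ℝ := fun n i => {x | ∫ y, |U x y - f i y| ∂mu < 1 / ((n:ℝ)+1)}
  have hnull : ∀ᵐ x ∂mu, ∀ n i, mu (E n i) = 0 → x ∉ E n i := by
    rw [ae_all_iff]; intro n
    rw [ae_all_iff]; intro i
    by_cases h : mu (E n i) = 0
    · have := measure_eq_zero_iff_ae_notMem.1 h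
      filter_upwards [this] with x hx _ using hx
    · simp [h]
  filter_upwards [hnull] with x hx ε hε
  obtain ⟨n, hn⟩ := exists_nat_one_div_lt (show 0 < ε / 2 by linarith)
  have hxi := row_int hU hC x
  obtain ⟨i, hi⟩ := (TopologicalSpace.denseRange_denseSeq (Lp ℝ 1 mu)).exists_dist_lt
    (hxi.toL1 (U x)) (show (0:ℝ) < 1 / ((n:ℝ)+1) by positivity)
  have hmem : x ∈ E n i := by
    change ∫ y, |U x y - f i y| ∂mu < 1 / ((n:ℝ)+1)
    rw [L1.dist_eq_integral_dist] at hi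
    refine lt_of_le_of_lt (le_of_eq ?_) hi
    refine integral_congr_ae ?_
    filter_upwards [hxi.coeFn_toL1] with y hy
    rw [hy, Real.dist_eq]
  have hpos : mu (E n i) ≠ 0 := fun h => hx n i h hmem
  refine fun h0 => hpos (measure_mono_null ?_ h0)
  intro x' hx'
  have hmem' : ∫ y, |U x' y - f i y| ∂mu < 1 / ((n:ℝ)+1) := hx'
  have hmem1 : ∫ y, |U x y - f i y| ∂mu < 1 / ((n:ℝ)+1) := hmem
  change hd U x x' < ε
  have hle : hd U x x' ≤ ∫ y, |U x y - f i y| + |U x' y - f i y| ∂mu := by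
    refine integral_mono ((hxi.sub (row_int hU hC x')).abs)
      ((hxi.sub (hfi i)).abs.add ((row_int hU hC x').sub (hfi i)).abs) fun y => ?_
    dsimp only
    rw [abs_sub_comm (U x' y)]
    exact abs_sub_le _ _ _
  have i1 : Integrable (fun y => |U x y - f i y|) mu := (hxi.sub (hfi i)).abs
  have i2 : Integrable (fun y => |U x' y - f i y|) mu := ((row_int hU hC x').sub (hfi i)).abs
  rw [integral_add i1 i2] at hle
  linarith

lemma four_diff {M a b c d a' b' c' d' : ℝ} (hM : 0 ≤ M) (_ : |a| ≤ M) (hb : |b| ≤ M) (hc : |c| ≤ M)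
    (hd : |d| ≤ M) (ha' : |a'| ≤ M) (hb' : |b'| ≤ M) (hc' : |c'| ≤ M) (_ : |d'| ≤ M) :
    |a * b * c * d - a' * b' * c' * d'| ≤
      M^3 * (|a - a'| + |b - b'| + |c - c'| + |d - d'|) := by
  have e : a * b * c * d - a' * b' * c' * d' = (a - a') * b * c * d + a' * (b - b') * c * d
    + a' * b' * (c - c') * d + a' * b' * c' * (d - d') := by ring
  rw [e]
  have t1 : |(a - a') * b * c * d| ≤ |a - a'| * M * M * M := by
    rw [abs_mul, abs_mul, abs_mul]; gcongr
  have t2 : |a' * (b - b') * c * d| ≤ M * |b - b'| * M * M := by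
    rw [abs_mul, abs_mul, abs_mul]; gcongr
  have t3 : |a' * b' * (c - c') * d| ≤ M * M * |c - c'| * M := by
    rw [abs_mul, abs_mul, abs_mul]; gcongr
  have t4 : |a' * b' * c' * (d - d')| ≤ M * M * M * |d - d'| := by
    rw [abs_mul, abs_mul, abs_mul]; gcongr
  have := abs_add_le ((a - a') * b * c * d + a' * (b - b') * c * d
    + a' * b' * (c - c') * d) (a' * b' * c' * (d - d'))
  have := abs_add_le ((a - a') * b * c * d + a' * (b - b') * c * d) (a' * b' * (c - c') * d)
  have := abs_add_le ((a - a') * b * c * d) (a' * (b - b') * c * d)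
  nlinarith

lemma GG_diff (hU : Measurable (Function.uncurry U)) (hC : ∀ x y, |U x y| ≤ C)
    (x1 x2 x3 x4 x1' x2' x3' x4' : ℝ) :
    |GG U x1 x2 x3 x4 - GG U x1' x2' x3' x4'| ≤
      (C+1)^3 * (hd U x1 x1' + hd U x2 x2' + hd U x3 x3' + hd U x4 x4') := by
  have hC0 : 0 ≤ C := (abs_nonneg _).trans (hC 0 0)
  have h1 : ∀ x y, |U x y| ≤ C + 1 := fun x y => (hC x y).trans (by linarith)
  have h2 : ∀ x y, |1 - U x y| ≤ C + 1 := fun x y => by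
    have := abs_le.1 (hC x y)
    rw [abs_le]; constructor <;> linarith
  have hint : ∀ x1 x2 x3 x4, Integrable
      (fun y => U x1 y * U x2 y * (1 - U x3 y) * (1 - U x4 y)) mu := by
    intro x1 x2 x3 x4
    refine integrable_of_bdd ((((row_meas hU x1).mul (row_meas hU x2)).mul
      (measurable_const.sub (row_meas hU x3))).mul (measurable_const.sub (row_meas hU x4)))
      ((C+1) * (C+1) * (C+1) * (C+1)) fun y => ?_
    rw [abs_mul, abs_mul, abs_mul]
    gcongr
    · exact h1 _ _
    · exact h1 _ _
    · exact h2 _ _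
    · exact h2 _ _
  have hdi : ∀ x x', Integrable (fun y => |U x y - U x' y|) mu := fun x x' =>
    ((row_int hU hC x).sub (row_int hU hC x')).abs
  unfold GG hd
  have hd2 : Integrable (fun y => |U x1 y - U x1' y| + |U x2 y - U x2' y|) mu :=
    (hdi _ _).add (hdi _ _)
  have hd3 : Integrable (fun y => |U x1 y - U x1' y| + |U x2 y - U x2' y| + |U x3 y - U x3' y|) mu :=
    hd2.add (hdi _ _)
  have hd4 : Integrable (fun y => |U x1 y - U x1' y| + |U x2 y - U x2' y| + |U x3 y - U x3' y|
    + |U x4 y - U x4' y|) mu := hd3.add (hdi _ _)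
  rw [← integral_sub (hint _ _ _ _) (hint _ _ _ _), ← integral_add (hdi _ _) (hdi _ _),
    ← integral_add hd2 (hdi _ _), ← integral_add hd3 (hdi _ _), ← integral_const_mul]
  refine (abs_integral_le_integral_abs).trans ?_
  refine integral_mono ((hint _ _ _ _).sub (hint _ _ _ _)).abs
    (hd4.const_mul _) fun y => ?_
  dsimp only
  refine (four_diff (M := C+1) (by linarith) (h1 _ _) (h1 _ _) (h2 _ _) (h2 _ _) (h1 _ _)
    (h1 _ _) (h2 _ _) (h2 _ _)).trans (le_of_eq ?_)
  rw [show 1 - U x3 y - (1 - U x3' y) = -(U x3 y - U x3' y) by ring,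
    show 1 - U x4 y - (1 - U x4' y) = -(U x4 y - U x4' y) by ring, abs_neg, abs_neg]

lemma good_GG (hU : Measurable (Function.uncurry U)) (hC : ∀ x y, |U x y| ≤ C) (hJ : JJ U = 0)
    {x x' : ℝ} (hx : Good U x) (hx' : Good U x') :
    GG U x x x' x' = 0 ∨ GG U x' x' x x = 0 := by
  have hC0 : 0 ≤ C := (abs_nonneg _).trans (hC 0 0)
  by_contra hcon
  push Not at hcon
  obtain ⟨ha, hb⟩ := hcon
  obtain ⟨ε, hε, h1, h2⟩ : ∃ ε > 0, (C+1)^3 * (4 * ε) < |GG U x x x' x'| ∧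
      (C+1)^3 * (4 * ε) < |GG U x' x' x x| := by
    have hpos : 0 < min |GG U x x x' x'| |GG U x' x' x x| :=
      lt_min (abs_pos.2 ha) (abs_pos.2 hb)
    have hK : 0 < (C+1)^3 := by positivity
    refine ⟨min |GG U x x x' x'| |GG U x' x' x x| / (8 * (C+1)^3), by positivity, ?_, ?_⟩
    · refine lt_of_lt_of_le ?_ (min_le_left _ |GG U x' x' x x|)
      have : (C+1)^3 * (4 * (min |GG U x x x' x'| |GG U x' x' x x| / (8 * (C+1)^3))) =
        min |GG U x x x' x'| |GG U x' x' x x| / 2 := by field_simp; norm_num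
      rw [this]; linarith
    · refine lt_of_lt_of_le ?_ (min_le_right |GG U x x x' x'| _)
      have : (C+1)^3 * (4 * (min |GG U x x x' x'| |GG U x' x' x x| / (8 * (C+1)^3))) =
        min |GG U x x x' x'| |GG U x' x' x x| / 2 := by field_simp; norm_num
      rw [this]; linarith
  let S : Fin 4 → Set ℝ := fun i => if i < 2 then {w | hd U x w < ε} else {w | hd U x' w < ε}
  have hSpos : Measure.pi (fun _ : Fin 4 => mu) (Set.univ.pi S) ≠ 0 := by
    rw [Measure.pi_pi, Finset.prod_ne_zero_iff]
    intro i _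
    by_cases hi : i < 2
    · simpa only [S, if_pos hi] using hx ε hε
    · simpa only [S, if_neg hi] using hx' ε hε
  obtain ⟨z, hz, hz0⟩ : ∃ z ∈ Set.univ.pi S,
      GG U (z 0) (z 1) (z 2) (z 3) * GG U (z 2) (z 3) (z 0) (z 1) = 0 := by
    by_contra hno
    push Not at hno
    refine hSpos (measure_mono_null ?_ (GG_zero hU hC hJ))
    intro z hz
    exact hno z hz
  have z0 : hd U x (z 0) < ε := by simpa [S] using hz 0 (Set.mem_univ _)
  have z1 : hd U x (z 1) < ε := by simpa [S] using hz 1 (Set.mem_univ _)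
  have z2 : hd U x' (z 2) < ε := by simpa [S, Fin.lt_def] using hz 2 (Set.mem_univ _)
  have z3 : hd U x' (z 3) < ε := by simpa [S, Fin.lt_def] using hz 3 (Set.mem_univ _)
  rcases mul_eq_zero.1 hz0 with h | h
  · have := GG_diff hU hC x x x' x' (z 0) (z 1) (z 2) (z 3)
    rw [h, sub_zero] at this
    have hlt : (C+1)^3 * (hd U x (z 0) + hd U x (z 1) + hd U x' (z 2) + hd U x' (z 3)) ≤
      (C+1)^3 * (4 * ε) := by
      gcongr
      linarith
    linarith
  · have := GG_diff hU hC x' x' x x (z 2) (z 3) (z 0) (z 1)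
    rw [h, sub_zero] at this
    have hlt : (C+1)^3 * (hd U x' (z 2) + hd U x' (z 3) + hd U x (z 0) + hd U x (z 1)) ≤
      (C+1)^3 * (4 * ε) := by
      gcongr
      linarith
    linarith

lemma GG_zero_row (hU : Measurable (Function.uncurry U)) (hC : ∀ x y, |U x y| ≤ C)
    {x x' : ℝ} (h : GG U x x x' x' = 0) : ∀ᵐ y ∂mu, U x y = 0 ∨ U x' y = 1 := by
  have hC0 : 0 ≤ C := (abs_nonneg _).trans (hC 0 0)
  have he : ∀ y, U x y * U x y * (1 - U x' y) * (1 - U x' y) = (U x y * (1 - U x' y)) ^ 2 :=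
    fun y => by ring
  unfold GG at h
  simp only [he] at h
  rw [integral_eq_zero_iff_of_nonneg] at h
  · filter_upwards [h] with y hy
    have : U x y * (1 - U x' y) = 0 := by simpa using hy
    rcases mul_eq_zero.1 this with h | h
    · exact Or.inl h
    · exact Or.inr (by linarith)
  · intro y; exact sq_nonneg _
  · refine integrable_of_bdd (C := (C * (C + 1)) ^ 2)
      (((row_meas hU x).mul (measurable_const.sub (row_meas hU x'))).pow_const 2) fun y => ?_
    rw [abs_pow, abs_mul]
    gcongr
    · exact hC _ _
    · have := abs_le.1 (hC x' y)
      rw [abs_le]; constructor <;> linarith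

lemma good_01 (hU : Measurable (Function.uncurry U)) (hC : ∀ x y, |U x y| ≤ C) (hJ : JJ U = 0)
    {x : ℝ} (hx : Good U x) : ∀ᵐ y ∂mu, U x y = 0 ∨ U x y = 1 :=
  GG_zero_row hU hC ((good_GG hU hC hJ hx hx).elim id id)

/-- Negated degree, used as key. -/
def key (U : ℝ → ℝ → ℝ) (x : ℝ) : ℝ := - ∫ y, U x y ∂mu

lemma key_meas (hU : Measurable (Function.uncurry U)) : Measurable (key U) :=
  (hU.stronglyMeasurable.integral_prod_right' (ν := mu)).measurable.neg

lemma good_mono (hU : Measurable (Function.uncurry U)) (hC : ∀ x y, |U x y| ≤ C) (hJ : JJ U = 0)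
    {x x' : ℝ} (hx : Good U x) (hx' : Good U x') (hp : prec (key U) x' x) :
    ∀ᵐ y ∂mu, U x y = 0 ∨ U x' y = 1 := by
  rcases good_GG hU hC hJ hx hx' with h | h
  · exact GG_zero_row hU hC h
  have h1 := GG_zero_row hU hC h
  have a := good_01 hU hC hJ hx
  have b := good_01 hU hC hJ hx'
  have hk : key U x' ≤ key U x := by
    rw [prec_iff] at hp
    rcases hp with hp | hp
    · exact hp.le
    · exact hp.1.le
  unfold key at hk
  have hle : ∀ᵐ y ∂mu, 0 ≤ U x y - U x' y := by
    filter_upwards [h1, a, b] with y h a b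
    rcases h with h | h <;> rcases a with a | a <;> rcases b with b | b <;> rw [a, b] <;> 
      first | (norm_num; done) | (exfalso; linarith)
  have hi := (row_int hU hC x).sub (row_int hU hC x')
  have hz : ∫ y, (U x y - U x' y) ∂mu = 0 := by
    apply le_antisymm
    · rw [integral_sub (row_int hU hC x) (row_int hU hC x')]
      linarith
    · exact integral_nonneg_of_ae hle
  rw [integral_eq_zero_iff_of_nonneg_ae hle hi] at hz
  filter_upwards [hz, a] with y hy a
  have : U x y - U x' y = 0 := by simpa using hy
  rcases a with a | a
  · exact Or.inl a
  · right; linarith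

lemma mono_ae (hU : Measurable (Function.uncurry U)) (hC : ∀ x y, |U x y| ≤ C) (hJ : JJ U = 0) :
    ∀ᵐ y ∂mu, ∀ᵐ x ∂mu, ∀ᵐ x' ∂mu, prec (key U) x' x → U x y = 0 ∨ U x' y = 1 := by
  have hms : MeasurableSet {w : (ℝ × ℝ) × ℝ |
      prec (key U) w.1.2 w.1.1 → U w.1.1 w.2 = 0 ∨ U w.1.2 w.2 = 1} := by
    have m1 : MeasurableSet {w : (ℝ × ℝ) × ℝ | prec (key U) w.1.2 w.1.1} :=
      prec_meas_comp (key_meas hU) (measurable_snd.comp measurable_fst)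
        (measurable_fst.comp measurable_fst)
    have m2 : MeasurableSet {w : (ℝ × ℝ) × ℝ | U w.1.1 w.2 = 0} :=
      measurableSet_eq_fun (meas_comp hU (measurable_fst.comp measurable_fst) measurable_snd)
        measurable_const
    have m3 : MeasurableSet {w : (ℝ × ℝ) × ℝ | U w.1.2 w.2 = 1} :=
      measurableSet_eq_fun (meas_comp hU (measurable_snd.comp measurable_fst) measurable_snd)
        measurable_const
    exact m1.imp (m2.union m3)
  have hG := good_ae hU hC
  have h1 : ∀ᵐ w ∂(mu.prod mu), ∀ᵐ y ∂mu,
      prec (key U) w.2 w.1 → U w.1 y = 0 ∨ U w.2 y = 1 := by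
    have g1 := (measurePreserving_fst (μ := mu) (ν := mu)).quasiMeasurePreserving.ae hG
    have g2 := (measurePreserving_snd (μ := mu) (ν := mu)).quasiMeasurePreserving.ae hG
    filter_upwards [g1, g2] with w hw1 hw2
    by_cases hp : prec (key U) w.2 w.1
    · filter_upwards [good_mono hU hC hJ hw1 hw2 hp] with y hy _ using hy
    · simp [hp]
  have h2 := (Measure.ae_ae_comm (μ := mu.prod mu) (ν := mu)
    (p := fun w y => prec (key U) w.2 w.1 → U w.1 y = 0 ∨ U w.2 y = 1) hms).1 h1
  filter_upwards [h2] with y hy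
  exact Measure.ae_ae_of_ae_prod hy

lemma ae01 (hU : Measurable (Function.uncurry U)) (hC : ∀ x y, |U x y| ≤ C) (hJ : JJ U = 0) :
    ∀ᵐ w ∂(mu.prod mu), U w.1 w.2 = 0 ∨ U w.1 w.2 = 1 := by
  rw [Measure.ae_prod_iff_ae_ae]
  · filter_upwards [good_ae hU hC] with x hx using good_01 hU hC hJ hx
  · exact (measurableSet_eq_fun hU measurable_const).union (measurableSet_eq_fun hU measurable_const)

end good

section final

open MvPolynomial

/-- The threshold graphon of a polynomial. -/
def Wp (p : MvPolynomial (Fin 2) ℝ) : ℝ → ℝ → ℝ :=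
  fun x y => if 0 ≤ MvPolynomial.eval ![x, y] p then (1 : ℝ) else 0

/-- Truncation to the unit square. -/
def tr (U : ℝ → ℝ → ℝ) : ℝ → ℝ → ℝ := fun x y => if x ∈ I01 ∧ y ∈ I01 then U x y else 0

lemma cube_meas (n : ℕ) : MeasurableSet (cube n) :=
  MeasurableSet.univ_pi fun _ => measurableSet_Icc

lemma homDensity_tr {n : ℕ} (F : SimpleGraph (Fin n)) (U : ℝ → ℝ → ℝ) :
    homDensity F (tr U) = homDensity F U := by
  unfold homDensity
  refine setIntegral_congr_fun (cube_meas n) fun x hx => ?_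
  refine Finset.prod_congr rfl fun q _ => ?_
  unfold tr
  rw [if_pos ⟨hx _ (Set.mem_univ _), hx _ (Set.mem_univ _)⟩]

lemma tr_meas {U : ℝ → ℝ → ℝ} (hU : Measurable (Function.uncurry U)) :
    Measurable (Function.uncurry (tr U)) := by
  have h : MeasurableSet {z : ℝ × ℝ | z.1 ∈ I01 ∧ z.2 ∈ I01} :=
    (measurable_fst measurableSet_Icc).inter (measurable_snd measurableSet_Icc)
  exact Measurable.ite h hU measurable_const

lemma tr_symm {U : ℝ → ℝ → ℝ} (hU : ∀ x ∈ I01, ∀ y ∈ I01, U x y = U y x) (x y : ℝ) :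
    tr U x y = tr U y x := by
  unfold tr
  by_cases h : x ∈ I01 ∧ y ∈ I01
  · rw [if_pos h, if_pos h.symm, hU x h.1 y h.2]
  · rw [if_neg h, if_neg (fun h' => h h'.symm)]

lemma tr_bound {U : ℝ → ℝ → ℝ} {C : ℝ} (hU : ∀ x ∈ I01, ∀ y ∈ I01, |U x y| ≤ C) (x y : ℝ) :
    |tr U x y| ≤ C := by
  have hz : (0:ℝ) ∈ I01 := ⟨le_rfl, zero_le_one⟩
  have hC0 : 0 ≤ C := (abs_nonneg _).trans (hU 0 hz 0 hz)
  unfold tr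
  split_ifs with h
  · exact hU x h.1 y h.2
  · simpa using hC0

lemma pair_cont (p : MvPolynomial (Fin 2) ℝ) :
    Continuous fun z : ℝ × ℝ => eval ![z.1, z.2] p := by
  have h : Continuous fun z : ℝ × ℝ => (![z.1, z.2] : Fin 2 → ℝ) := by
    refine continuous_pi fun i => ?_
    fin_cases i
    · exact continuous_fst
    · exact continuous_snd
  exact (MvPolynomial.continuous_eval p).comp h

lemma eval_pair (p : MvPolynomial (Fin 2) ℝ) (x y : ℝ) :
    eval ![x, y] p = ∑ d ∈ p.support, coeff d p * (x ^ d 0 * y ^ d 1) := by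
  rw [MvPolynomial.eval_eq']
  simp [Fin.prod_univ_two]

lemma eval_bound (p : MvPolynomial (Fin 2) ℝ) :
    ∃ K, ∀ x ∈ I01, ∀ y ∈ I01, |eval ![x, y] p| ≤ K := by
  refine ⟨∑ d ∈ p.support, |coeff d p|, fun x hx y hy => ?_⟩
  rw [eval_pair]
  refine (Finset.abs_sum_le_sum_abs _ _).trans (Finset.sum_le_sum fun d _ => ?_)
  rw [abs_mul, abs_of_nonneg (mul_nonneg (pow_nonneg hx.1 _) (pow_nonneg hy.1 _))]
  exact mul_le_of_le_one_right (abs_nonneg _)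
    (mul_le_one₀ (pow_le_one₀ hx.1 hx.2) (pow_nonneg hy.1 _) (pow_le_one₀ hy.1 hy.2))

lemma zeros_null (p : MvPolynomial (Fin 2) ℝ) (hp : p ≠ 0) :
    ∀ᵐ w ∂(mu.prod mu), eval ![w.1, w.2] p ≠ 0 := by
  have fin_ae : ∀ q : Polynomial ℝ, q ≠ 0 → ∀ᵐ x ∂mu, q.eval x ≠ 0 := by
    intro q hq
    have hfin : Set.Finite {x | q.eval x = 0} := by
      refine (q.roots.toFinset.finite_toSet).subset fun x hx => ?_
      simpa [hq] using hx
    have := measure_eq_zero_iff_ae_notMem.1 (hfin.measure_zero mu)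
    filter_upwards [this] with x hx using hx
  obtain ⟨v, hv⟩ : ∃ v : Fin 2 → ℝ, eval v p ≠ 0 := by
    by_contra h
    push Not at h
    exact hp (MvPolynomial.funext fun v => by rw [h v, map_zero])
  have hv' : eval ![v 0, v 1] p ≠ 0 := by
    have : (![v 0, v 1] : Fin 2 → ℝ) = v := by
      ext i; fin_cases i <;> rfl
    rwa [this]
  let q1 : Polynomial ℝ := ∑ d ∈ p.support, Polynomial.C (coeff d p) *
    (Polynomial.X ^ d 0 * Polynomial.C (v 1) ^ d 1)
  have hq1 : ∀ x, q1.eval x = eval ![x, v 1] p := fun x => by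
    rw [eval_pair]
    simp [q1, Polynomial.eval_finsetSum]
  let q2 : ℝ → Polynomial ℝ := fun x => ∑ d ∈ p.support, Polynomial.C (coeff d p) *
    (Polynomial.C x ^ d 0 * Polynomial.X ^ d 1)
  have hq2 : ∀ x y, (q2 x).eval y = eval ![x, y] p := fun x y => by
    rw [eval_pair]
    simp [q2, Polynomial.eval_finsetSum]
  rw [Measure.ae_prod_iff_ae_ae]
  · have h1 : q1 ≠ 0 := fun h => hv' (by rw [← hq1, h, Polynomial.eval_zero])
    filter_upwards [fin_ae q1 h1] with x hx
    have h2 : q2 x ≠ 0 := fun h => hx (by rw [hq1, ← hq2, h, Polynomial.eval_zero])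
    filter_upwards [fin_ae _ h2] with y hy
    rwa [hq2] at hy
  · exact (measurableSet_eq_fun (pair_cont p).measurable measurable_const).compl

lemma poly_int (p : MvPolynomial (Fin 2) ℝ) {U : ℝ → ℝ → ℝ} {C : ℝ} {κ : ℝ → ℝ}
    (hκ : Measurable κ) (hU : Measurable (Function.uncurry U))
    (hC : ∀ x y, |U x y| ≤ C) (hs : ∀ x y, U x y = U y x)
    (hm : ∀ᵐ y ∂mu, ∀ᵐ x ∂mu, ∀ᵐ x' ∂mu, prec κ x' x → U x y = 0 ∨ U x' y = 1) :
    ∫ w, U w.1 w.2 * eval ![rk κ w.1, rk κ w.2] p ∂(mu.prod mu) =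
      ∑ d ∈ p.support, coeff d p *
        (tB (Finset.univ : Finset (Fin (d 0 + 1) × Fin (d 1 + 1))) U /
          (((d 0 : ℝ) + 1) * ((d 1 : ℝ) + 1))) := by
  have hC0 : 0 ≤ C := (abs_nonneg _).trans (hC 0 0)
  have hint : ∀ a b : ℕ, Integrable (fun w : ℝ × ℝ => U w.1 w.2 * rk κ w.1 ^ a * rk κ w.2 ^ b)
      (mu.prod mu) := by
    intro a b
    refine integrable_of_bdd (C := C) ?_ fun w => ?_
    · exact ((meas_comp hU measurable_fst measurable_snd).mul
        (((rk_meas hκ).comp measurable_fst).pow_const a)).mul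
        (((rk_meas hκ).comp measurable_snd).pow_const b)
    · have h1 := rk_mem hκ w.1
      have h2 := rk_mem hκ w.2
      rw [mul_assoc, abs_mul,
        abs_of_nonneg (mul_nonneg (pow_nonneg h1.1 _) (pow_nonneg h2.1 _))]
      refine (mul_le_of_le_one_right (abs_nonneg _) (mul_le_one₀ (pow_le_one₀ h1.1 h1.2)
        (pow_nonneg h2.1 _) (pow_le_one₀ h2.1 h2.2))).trans (hC _ _)
  have e : ∀ w : ℝ × ℝ, U w.1 w.2 * eval ![rk κ w.1, rk κ w.2] p =
      ∑ d ∈ p.support, coeff d p * (U w.1 w.2 * rk κ w.1 ^ d 0 * rk κ w.2 ^ d 1) := by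
    intro w
    rw [eval_pair, Finset.mul_sum]
    exact Finset.sum_congr rfl fun d _ => by ring
  simp only [e]
  rw [integral_finsetSum]
  · refine Finset.sum_congr rfl fun d _ => ?_
    rw [integral_const_mul, integral_prod _ (hint _ _), tB_complete hκ hU hC hs hm]
    have h0 : ((d 0 : ℝ) + 1) ≠ 0 := by positivity
    have h1 : ((d 1 : ℝ) + 1) ≠ 0 := by positivity
    congr 1
    field_simp
  · intro d _
    exact (hint _ _).const_mul _

section Wfacts

variable (p : MvPolynomial (Fin 2) ℝ)

lemma Wp_meas : Measurable (Function.uncurry (Wp p)) :=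
  Measurable.ite (measurableSet_le measurable_const (pair_cont p).measurable) measurable_const
    measurable_const

lemma Wp_abs (x y : ℝ) : |Wp p x y| ≤ 1 := by
  unfold Wp; split_ifs <;> simp

lemma Wp_memW
    (hsym : ∀ x y : ℝ, MvPolynomial.eval ![x, y] p = MvPolynomial.eval ![y, x] p) : memW (Wp p) :=
  ⟨Wp_meas p, fun x _ y _ => by unfold Wp; rw [hsym], 1, fun x _ y _ => Wp_abs p x y⟩

lemma trWp_01 (x y : ℝ) : tr (Wp p) x y = 0 ∨ tr (Wp p) x y = 1 := by
  unfold tr Wp; split_ifs <;> simp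

lemma trWp_mono
    (hmono : ∀ x x' y y' : ℝ, x ∈ I01 → x' ∈ I01 → y ∈ I01 → y' ∈ I01 →
      x ≤ x' → y ≤ y' →
      MvPolynomial.eval ![x', y'] p ≤ MvPolynomial.eval ![x, y] p) {x x' y : ℝ} (hx' : x' ∈ I01) (hle : x' ≤ x) :
    tr (Wp p) x y = 0 ∨ tr (Wp p) x' y = 1 := by
  by_cases h : x ∈ I01 ∧ y ∈ I01
  · by_cases h0 : 0 ≤ eval ![x, y] p
    · right
      have := hmono x' x y y hx' h.1 h.2 h.2 hle le_rfl
      unfold tr Wp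
      rw [if_pos ⟨hx', h.2⟩, if_pos (h0.trans this)]
    · left
      unfold tr Wp
      rw [if_pos h, if_neg h0]
  · left
    unfold tr
    rw [if_neg h]

lemma JJ_Wp
    (hmono : ∀ x x' y y' : ℝ, x ∈ I01 → x' ∈ I01 → y ∈ I01 → y' ∈ I01 →
      x ≤ x' → y ≤ y' →
      MvPolynomial.eval ![x', y'] p ≤ MvPolynomial.eval ![x, y] p) : JJ (tr (Wp p)) = 0 := by
  unfold JJ
  rw [← integral_zero]
  refine integral_congr_ae (Filter.Eventually.of_forall fun z => ?_)
  dsimp only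
  by_contra hne
  rw [← ne_eq, Finset.prod_ne_zero_iff] at hne
  have h00 := hne (0, 0) (Finset.mem_univ _)
  have h22 := hne (2, 2) (Finset.mem_univ _)
  have h02 := hne (0, 2) (Finset.mem_univ _)
  have h20 := hne (2, 0) (Finset.mem_univ _)
  simp [sg, Fin.lt_def] at h00 h22 h02 h20
  have m0 : z.1 0 ∈ I01 := by
    by_contra h
    exact h00 (by unfold tr; rw [if_neg (fun h' => h h'.1)])
  have m2 : z.1 2 ∈ I01 := by
    by_contra h
    exact h22 (by unfold tr; rw [if_neg (fun h' => h h'.1)])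
  rcases le_total (z.1 0) (z.1 2) with hle | hle
  · rcases trWp_mono p hmono (y := z.2 2) m0 hle with h | h
    · exact h22 h
    · exact h02 (by rw [h]; norm_num)
  · rcases trWp_mono p hmono (y := z.2 0) m2 hle with h | h
    · exact h00 h
    · exact h20 (by rw [h]; norm_num)

lemma Wp_hm
    (hmono : ∀ x x' y y' : ℝ, x ∈ I01 → x' ∈ I01 → y ∈ I01 → y' ∈ I01 →
      x ≤ x' → y ≤ y' →
      MvPolynomial.eval ![x', y'] p ≤ MvPolynomial.eval ![x, y] p) : ∀ᵐ y ∂mu, ∀ᵐ x ∂mu, ∀ᵐ x' ∂mu,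
    prec (fun _ => 0) x' x → tr (Wp p) x y = 0 ∨ tr (Wp p) x' y = 1 := by
  refine Filter.Eventually.of_forall fun y => Filter.Eventually.of_forall fun x => ?_
  filter_upwards [mu_ae_mem] with x' hx' h
  rw [prec_iff] at h
  exact trWp_mono p hmono hx' (by simpa using h.elim (fun h => absurd h (lt_irrefl _)) fun h => h.2.le)

lemma JJ_congr {U V : ℝ → ℝ → ℝ} {C D : ℝ} (hU : Measurable (Function.uncurry U))
    (hC : ∀ x y, |U x y| ≤ C) (hV : Measurable (Function.uncurry V)) (hD : ∀ x y, |V x y| ≤ D)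
    (h4 : ∀ E : Finset (Fin 4 × Fin 4), tB E U = tB E V) : JJ U = JJ V := by
  rw [JJ_expand hU hC, JJ_expand hV hD]
  refine Finset.sum_congr rfl ?_
  intro t _
  rw [h4]

lemma comp_int {W1 : ℝ → ℝ → ℝ} (hW : Measurable (Function.uncurry W1)) {φ : ℝ → ℝ}
    (hmp : MeasurePreserving (Prod.map φ φ) (mu.prod mu) (mu.prod mu)) :
    ∫ w, W1 w.1 w.2 * eval ![w.1, w.2] p ∂(mu.prod mu) =
        ∫ w, W1 (φ w.1) (φ w.2) * eval ![φ w.1, φ w.2] p ∂(mu.prod mu) := by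
  have hm2 : Measurable fun w : ℝ × ℝ => W1 w.1 w.2 * eval ![w.1, w.2] p :=
    Measurable.mul hW (pair_cont p).measurable
  have h := integral_map (μ := mu.prod mu) hmp.measurable.aemeasurable
    (f := fun w : ℝ × ℝ => W1 w.1 w.2 * eval ![w.1, w.2] p) hm2.aestronglyMeasurable
  rw [hmp.map_eq] at h
  exact h

lemma zero_int (W1 : ℝ → ℝ → ℝ) :
    ∫ w, W1 w.1 w.2 * eval ![rk (fun _ => 0) w.1, rk (fun _ => 0) w.2] p
        ∂(mu.prod mu) = ∫ w, W1 w.1 w.2 * eval ![w.1, w.2] p ∂(mu.prod mu) := by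
  refine integral_congr_ae ?_
  have g1 := (measurePreserving_fst (μ := mu) (ν := mu)).quasiMeasurePreserving.ae mu_ae_mem
  have g2 := (measurePreserving_snd (μ := mu) (ν := mu)).quasiMeasurePreserving.ae mu_ae_mem
  filter_upwards [g1, g2] with w h1 h2
  rw [rk_zero h1, rk_zero h2]

lemma eq_int
    (hsym : ∀ x y : ℝ, MvPolynomial.eval ![x, y] p = MvPolynomial.eval ![y, x] p)
    (hmono : ∀ x x' y y' : ℝ, x ∈ I01 → x' ∈ I01 → y ∈ I01 → y' ∈ I01 →
      x ≤ x' → y ≤ y' →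
      MvPolynomial.eval ![x', y'] p ≤ MvPolynomial.eval ![x, y] p) {U : ℝ → ℝ → ℝ} {C : ℝ} (hU : Measurable (Function.uncurry U))
    (hC : ∀ x y, |U x y| ≤ C) (hs : ∀ x y, U x y = U y x) (hJ : JJ U = 0)
    (hK : ∀ d ∈ p.support, tB (Finset.univ : Finset (Fin (d 0 + 1) × Fin (d 1 + 1))) U =
      tB (Finset.univ : Finset (Fin (d 0 + 1) × Fin (d 1 + 1))) (tr (Wp p))) :
    ∫ w, U w.1 w.2 * eval ![rk (key U) w.1, rk (key U) w.2] p ∂(mu.prod mu) =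
      ∫ w, tr (Wp p) w.1 w.2 * eval ![w.1, w.2] p ∂(mu.prod mu) := by
  have e1 := poly_int p (key_meas hU) hU hC hs (mono_ae hU hC hJ)
  have e2 := poly_int p (κ := fun _ => 0) measurable_const (tr_meas (Wp_meas p))
    (tr_bound fun x _ y _ => Wp_abs p x y) (tr_symm (Wp_memW p hsym).2.1) (Wp_hm p hmono)
  rw [zero_int] at e2
  refine e1.trans (Eq.trans ?_ e2.symm)
  refine Finset.sum_congr rfl ?_
  intro d hd
  rw [hK d hd]

lemma eval_comp_meas {φ : ℝ → ℝ} (hφm : Measurable φ) :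
    Measurable fun w : ℝ × ℝ => eval ![φ w.1, φ w.2] p := by
  simp only [eval_pair]
  fun_prop

lemma final_ae (hp : p ≠ 0) {U : ℝ → ℝ → ℝ} {C : ℝ} (hU : Measurable (Function.uncurry U))
    (hC : ∀ x y, |U x y| ≤ C) {φ : ℝ → ℝ} (hφm : Measurable φ) (hφI : ∀ x, φ x ∈ I01)
    (hmp : MeasurePreserving (Prod.map φ φ) (mu.prod mu) (mu.prod mu))
    (h01 : ∀ᵐ w ∂(mu.prod mu), U w.1 w.2 = 0 ∨ U w.1 w.2 = 1)
    (eqI : ∫ w, U w.1 w.2 * eval ![φ w.1, φ w.2] p ∂(mu.prod mu) =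
      ∫ w, tr (Wp p) w.1 w.2 * eval ![w.1, w.2] p ∂(mu.prod mu)) :
    ∀ᵐ w ∂(mu.prod mu), U w.1 w.2 = tr (Wp p) (φ w.1) (φ w.2) := by
  have hW : Measurable (Function.uncurry (tr (Wp p))) := tr_meas (Wp_meas p)
  have hWC : ∀ x y, |tr (Wp p) x y| ≤ 1 := tr_bound fun x _ y _ => Wp_abs p x y
  have hv : ∀ w : ℝ × ℝ,
      tr (Wp p) (φ w.1) (φ w.2) = if 0 ≤ eval ![φ w.1, φ w.2] p then (1:ℝ) else 0 := by
    intro w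
    unfold tr; rw [if_pos ⟨hφI _, hφI _⟩]; rfl
  rw [comp_int p hW hmp] at eqI
  generalize tr (Wp p) = W1 at *
  obtain ⟨K, hKb⟩ := eval_bound p
  have hpm : Measurable fun w : ℝ × ℝ => eval ![φ w.1, φ w.2] p :=
    eval_comp_meas p hφm
  have hpb : ∀ w : ℝ × ℝ, |eval ![φ w.1, φ w.2] p| ≤ K := fun w =>
    hKb (φ w.1) (hφI w.1) (φ w.2) (hφI w.2)
  have hUm : Measurable fun w : ℝ × ℝ => U w.1 w.2 := hU
  have hWm : Measurable fun w : ℝ × ℝ => W1 (φ w.1) (φ w.2) := hW.comp (hφm.prodMap hφm)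
  have hC0 : 0 ≤ C := (abs_nonneg _).trans (hC 0 0)
  have i1 : Integrable (fun w : ℝ × ℝ => U w.1 w.2 * eval ![φ w.1, φ w.2] p) (mu.prod mu) :=
    integrable_of_bdd (hUm.mul hpm) (C * K) fun w => by
      rw [abs_mul]
      exact mul_le_mul (hC _ _) (hpb w) (abs_nonneg _) hC0
  have i2 : Integrable (fun w : ℝ × ℝ => W1 (φ w.1) (φ w.2) * eval ![φ w.1, φ w.2] p)
      (mu.prod mu) :=
    integrable_of_bdd (hWm.mul hpm) (1 * K) fun w => by
      rw [abs_mul]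
      exact mul_le_mul (hWC _ _) (hpb w) (abs_nonneg _) zero_le_one
  have hnn : ∀ᵐ w ∂(mu.prod mu),
      0 ≤ W1 (φ w.1) (φ w.2) * eval ![φ w.1, φ w.2] p - U w.1 w.2 * eval ![φ w.1, φ w.2] p := by
    filter_upwards [h01] with w hw
    rw [hv]
    split_ifs with hs
    · rcases hw with h | h <;> rw [h] <;> linarith
    · rcases hw with h | h <;> rw [h] <;> linarith
  have hz : ∫ w, (W1 (φ w.1) (φ w.2) * eval ![φ w.1, φ w.2] p -
      U w.1 w.2 * eval ![φ w.1, φ w.2] p) ∂(mu.prod mu) = 0 := by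
    rw [integral_sub i2 i1, eqI, sub_self]
  rw [integral_eq_zero_iff_of_nonneg_ae hnn (i2.sub i1)] at hz
  have hne := hmp.quasiMeasurePreserving.ae (zeros_null p hp)
  filter_upwards [hz, hne] with w h1 h2
  have h1' : W1 (φ w.1) (φ w.2) * eval ![φ w.1, φ w.2] p -
      U w.1 w.2 * eval ![φ w.1, φ w.2] p = 0 := h1
  have h2' : eval ![φ w.1, φ w.2] p ≠ 0 := h2
  rw [← sub_mul] at h1'
  have := (mul_eq_zero.1 h1').resolve_right h2'
  linarith

lemma main_ae
    (hsym : ∀ x y : ℝ, MvPolynomial.eval ![x, y] p = MvPolynomial.eval ![y, x] p)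
    (hmono : ∀ x x' y y' : ℝ, x ∈ I01 → x' ∈ I01 → y ∈ I01 → y' ∈ I01 →
      x ≤ x' → y ≤ y' →
      MvPolynomial.eval ![x', y'] p ≤ MvPolynomial.eval ![x, y] p) (hp : p ≠ 0) {U : ℝ → ℝ → ℝ} {C : ℝ} (hU : Measurable (Function.uncurry U))
    (hC : ∀ x y, |U x y| ≤ C) (hs : ∀ x y, U x y = U y x)
    (h4 : ∀ E : Finset (Fin 4 × Fin 4), tB E U = tB E (tr (Wp p)))
    (hK : ∀ d ∈ p.support, tB (Finset.univ : Finset (Fin (d 0 + 1) × Fin (d 1 + 1))) U =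
      tB (Finset.univ : Finset (Fin (d 0 + 1) × Fin (d 1 + 1))) (tr (Wp p))) :
    ∀ᵐ w ∂(mu.prod mu), U w.1 w.2 = tr (Wp p) (rk (key U) w.1) (rk (key U) w.2) := by
  have hJ : JJ U = 0 := (JJ_congr hU hC (tr_meas (Wp_meas p))
    (tr_bound fun x _ y _ => Wp_abs p x y) h4).trans (JJ_Wp p hmono)
  exact final_ae p hp hU hC (rk_meas (key_meas hU)) (rk_mem (key_meas hU))
    ((rk_mp (key_meas hU)).prod (rk_mp (key_meas hU))) (ae01 hU hC hJ)
    (eq_int p hsym hmono hU hC hs hJ hK)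

end Wfacts

lemma homDensity_congr {U V : ℝ → ℝ → ℝ} (h : ∀ᵐ w ∂(mu.prod mu), U w.1 w.2 = V w.1 w.2)
    {n : ℕ} (F : SimpleGraph (Fin n)) : homDensity F U = homDensity F V := by
  unfold homDensity
  rw [cube_restrict]
  refine integral_congr_ae ?_
  have : ∀ᵐ z ∂(Measure.pi (fun _ : Fin n => mu)), ∀ i j : Fin n, i < j →
      U (z i) (z j) = V (z i) (z j) := by
    rw [ae_all_iff]; intro i
    rw [ae_all_iff]; intro j
    by_cases hij : i < j
    · have := (mp_pair hij.ne).quasiMeasurePreserving.ae h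
      filter_upwards [this] with z hz _ using hz
    · simp [hij]
  filter_upwards [this] with z hz
  refine Finset.prod_congr rfl fun q hq => ?_
  exact hz _ _ (Finset.mem_filter.1 hq).2.1

lemma homDensity_comp {W : ℝ → ℝ → ℝ} (hW : Measurable (Function.uncurry W)) {φ : ℝ → ℝ}
    (hφ : MeasurePreserving φ mu mu) {n : ℕ} (F : SimpleGraph (Fin n)) :
    homDensity F (fun x y => W (φ x) (φ y)) = homDensity F W := by
  unfold homDensity
  rw [cube_restrict]
  have hmp : MeasurePreserving (fun (z : Fin n → ℝ) i => φ (z i)) (Measure.pi (fun _ => mu))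
      (Measure.pi (fun _ => mu)) := measurePreserving_pi (fun _ => mu) (fun _ => mu) (fun _ => hφ)
  conv_rhs => rw [← hmp.map_eq]
  rw [integral_map hmp.measurable.aemeasurable]
  refine (Measurable.aestronglyMeasurable ?_)
  exact Finset.measurable_prod _ fun q _ =>
    meas_comp hW (measurable_pi_apply _) (measurable_pi_apply _)

lemma main_forcible (p : MvPolynomial (Fin 2) ℝ) (hp : p ≠ 0)
    (hsym : ∀ x y : ℝ, MvPolynomial.eval ![x, y] p = MvPolynomial.eval ![y, x] p)
    (hmono : ∀ x x' y y' : ℝ, x ∈ I01 → x' ∈ I01 → y ∈ I01 → y' ∈ I01 →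
      x ≤ x' → y ≤ y' →
      MvPolynomial.eval ![x', y'] p ≤ MvPolynomial.eval ![x, y] p) :
    FinitelyForcible memW (Wp p) := by
  refine ⟨Wp_memW p hsym, ?_⟩
  let N := p.totalDegree + 5
  let ι := Σ a : Fin N, Σ b : Fin N, Finset (Fin a × Fin b)
  let e : ι ≃ Fin (Fintype.card ι) := Fintype.equivFin ι
  refine ⟨Fintype.card ι, fun i => (e.symm i).1 + (e.symm i).2.1, fun i => gB (e.symm i).2.2, ?_⟩
  intro U hU heq n F
  obtain ⟨hUm, hUs, C, hUC⟩ := hU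
  have key0 : ∀ (a b : ℕ) (_ : a < N) (_ : b < N) (E : Finset (Fin a × Fin b)),
      tB E (tr U) = tB E (tr (Wp p)) := by
    intro a b ha hb E
    let q : ι := ⟨⟨a, ha⟩, ⟨b, hb⟩, E⟩
    have h1 : ∀ q : ι, homDensity (gB q.2.2) U = homDensity (gB q.2.2) (Wp p) := by
      intro q
      have := heq (e q)
      simp only at this
      rw [e.symm_apply_apply] at this
      exact this
    have h2 : homDensity (gB E) U = homDensity (gB E) (Wp p) := h1 q
    rw [← homDensity_gB, ← homDensity_gB, homDensity_tr, homDensity_tr, h2]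
  have hm := tr_meas hUm
  have hdeg : ∀ d ∈ p.support, ∀ i, d i ≤ p.totalDegree := by
    intro d hd i
    refine le_trans ?_ (MvPolynomial.le_totalDegree hd)
    by_cases h : i ∈ d.support
    · exact Finset.single_le_sum (f := fun i => d i) (fun _ _ => Nat.zero_le _) h
    · simp [Finsupp.notMem_support_iff.1 h]
  have hae := main_ae p hsym hmono hp hm (tr_bound hUC) (tr_symm hUs)
    (fun E => key0 4 4 (by omega) (by omega) E)
    (fun d hd => key0 _ _ (by have := hdeg d hd 0; omega) (by have := hdeg d hd 1; omega) _)
  rw [← homDensity_tr F U, homDensity_congr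
    (V := fun x y => tr (Wp p) (rk (key (tr U)) x) (rk (key (tr U)) y)) hae F,
    homDensity_comp (tr_meas (Wp_meas p)) (rk_mp (key_meas hm)) F, homDensity_tr]

end final

/-- for a symmetric two-variable real polynomial `p` which is monotone
decreasing on `[0,1]²`, the graphon `W = 1_{p(x,y) ≥ 0}` is finitely forcible in `𝒲`. -/
theorem statement7 (p : MvPolynomial (Fin 2) ℝ)
    (hsym : ∀ x y : ℝ, MvPolynomial.eval ![x, y] p = MvPolynomial.eval ![y, x] p)
    (hmono : ∀ x x' y y' : ℝ, x ∈ I01 → x' ∈ I01 → y ∈ I01 → y' ∈ I01 →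
      x ≤ x' → y ≤ y' →
      MvPolynomial.eval ![x', y'] p ≤ MvPolynomial.eval ![x, y] p) :
    FinitelyForcible memW
      (fun x y => if 0 ≤ MvPolynomial.eval ![x, y] p then (1 : ℝ) else 0) := by
  by_cases hp : p = 0
  · have h1 : (fun x y => if 0 ≤ MvPolynomial.eval ![x, y] p then (1 : ℝ) else 0) =
        Wp (1 : MvPolynomial (Fin 2) ℝ) := by
      funext x y
      simp [Wp, hp]
    rw [h1]
    exact main_forcible 1 one_ne_zero (by simp) (by simp)
  · exact main_forcible p hp hsym hmono
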